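/- Let λ > 0 and α, α_0, α̃, α̃_0 ∈ (0,1] with α̃/α > α̃_0/α_0. Let {N(t) : t ≥ 0} be random variables with P(N(t) = 0) proportional to 1/E^1_{α_0,1}(λ t^{α̃_0}) and, for integers k ≥ 1, P(N(t) = k) proportional to (λ t^{α̃})^k / ( Γ(αk+1) · E^1_{α,1}(λ t^{α̃}) ) (normalized so the probabilities sum to 1). Then for every θ ∈ ℝ the limit Ψ(θ) := lim_{t→∞} t^{−α̃/α} log E[e^{θ N(t)}] exists and Ψ(θ) = max{ λ^{1/α}(e^{θ/α} − 1), 0 }; in particular Ψ is not differentiable at θ = 0, its left derivative at 0 being 0 and its right derivative at 0 being λ^{1/α}/α. -/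

import Mathlib

open Filter Topology

/-- The classical Mittag-Leffler function `E^1_{α,1}(u) = ∑_{k≥0} u^k / Γ(αk+1)`. -/
noncomputable def mittagLeffler (α : ℝ) (u : ℝ) : ℝ :=
  ∑' k : ℕ, u ^ k / Real.Gamma (α * (k : ℝ) + 1)

/-- Unnormalized weights of the model in Section 4.2.2 of the paper:
`w(t,0) = 1/E^1_{α_0,1}(λt^{α̃_0})` and
`w(t,k) = (λt^{α̃})^k/(Γ(αk+1) E^1_{α,1}(λt^{α̃}))` for `k ≥ 1`. -/
noncomputable def wgt (lam α α0 αt αt0 : ℝ) (t : ℝ) (k : ℕ) : ℝ :=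
  if k = 0 then 1 / mittagLeffler α0 (lam * t ^ αt0)
  else (lam * t ^ αt) ^ k / (Real.Gamma (α * (k : ℝ) + 1) * mittagLeffler α (lam * t ^ αt))

/-- `P(N(t) = k)`, the weights normalized to sum to `1`. -/
noncomputable def pmfCtr (lam α α0 αt αt0 : ℝ) (t : ℝ) (k : ℕ) : ℝ :=
  wgt lam α α0 αt αt0 t k / ∑' j : ℕ, wgt lam α α0 αt αt0 t j

/-- `Ψ(θ) = max{λ^{1/α}(e^{θ/α} - 1), 0}`. -/
noncomputable def PsiFun (lam α : ℝ) (θ : ℝ) : ℝ :=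
  max (lam ^ (1 / α) * (Real.exp (θ / α) - 1)) 0

/-! Comparing terms after a unit shift of the argument makes the remaining factors geometric: it
bounds `E_α(s^α)` above by `e^{s+1}`, and `e^{s-1}` above by the largest term of `E_α(s^α)`, up to
factors polynomial in `s`, so `log E_α(s^α) ~ s`. On the scale `t^{α̃/α}` the weight at `k = 0` is
therefore negligible in the exponent, while the tilted weights at `k ≥ 1` contribute
`λ^{1/α}(e^{θ/α} - 1)`; the logarithm of the sum follows the larger of the two, and the
normalization, the case `θ = 0`, has exponent `0`. -/

open Set MeasureTheory

section ElementaryBounds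

lemma inv_one_sub_exp_neg_le {y : ℝ} (hy : 0 < y) : (1 - Real.exp (-y))⁻¹ ≤ y⁻¹ + 1 := by
  have hexp : Real.exp (-y) * (y + 1) ≤ 1 :=
    calc Real.exp (-y) * (y + 1) ≤ Real.exp (-y) * Real.exp y := by
          gcongr; exact Real.add_one_le_exp y
      _ = 1 := by rw [← Real.exp_add, neg_add_cancel, Real.exp_zero]
  have hpos : 0 < 1 - Real.exp (-y) := sub_pos.2 (Real.exp_lt_one_iff.2 (neg_lt_zero.2 hy))
  rw [inv_le_iff_one_le_mul₀ hpos, show y⁻¹ + 1 = (y + 1) / y by field_simp; ring,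
    div_mul_eq_mul_div, le_div_iff₀ hy]
  linarith

lemma rpow_mul_exp_neg_le_Gamma_add_one {x s : ℝ} (hx : 0 ≤ x) (hs : 0 ≤ s) :
    s ^ x * Real.exp (-s) ≤ Real.Gamma (x + 1) := by
  have hint := Real.GammaIntegral_convergent (show 0 < x + 1 by linarith)
  rw [Real.Gamma_eq_integral (by linarith), ← integral_exp_neg_Ioi, ← integral_const_mul]
  simp only [add_sub_cancel_right] at hint ⊢
  have hsub : Ioi s ⊆ Ioi 0 := Ioi_subset_Ioi hs
  calc ∫ u in Ioi s, s ^ x * Real.exp (-u)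
      ≤ ∫ u in Ioi s, Real.exp (-u) * u ^ x := by
        refine setIntegral_mono_on ((integrableOn_exp_neg_Ioi s).const_mul _) (hint.mono_set hsub)
          measurableSet_Ioi fun u hu => ?_
        rw [mul_comm]
        gcongr
        exact hu.le
    _ ≤ ∫ u in Ioi 0, Real.exp (-u) * u ^ x := by
        refine setIntegral_mono_set hint ?_ hsub.eventuallyLE
        filter_upwards [ae_restrict_mem measurableSet_Ioi] with u hu
        exact mul_nonneg (Real.exp_nonneg _) (Real.rpow_nonneg (le_of_lt hu) x)

lemma Gamma_add_one_le_factorial {x : ℝ} {n : ℕ} (hx : 0 ≤ x) (hxn : x ≤ n) :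
    Real.Gamma (x + 1) ≤ n.factorial := by
  have hmax := Real.convexOn_Gamma.le_max_of_mem_Icc (x := 1) (y := (n : ℝ) + 1) (z := x + 1)
    (by simp) (mem_Ioi.2 (by positivity)) ⟨by linarith, by linarith⟩
  rwa [Real.Gamma_one, Real.Gamma_nat_eq_factorial,
    max_eq_right (by exact_mod_cast n.factorial_pos)] at hmax

end ElementaryBounds

section MittagLeffler

variable {α : ℝ}

lemma rpow_pow_div_Gamma_le {s : ℝ} (hα : 0 ≤ α) (hs : 0 ≤ s) (k : ℕ) :
    (s ^ α) ^ k / Real.Gamma (α * (k : ℝ) + 1) ≤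
      Real.exp (s + 1) * Real.exp (-(α / (s + 1))) ^ k := by
  have hshift : s ≤ (s + 1) * Real.exp (-(1 / (s + 1))) :=
    calc s = (s + 1) * (1 - 1 / (s + 1)) := by field_simp; ring
      _ ≤ _ := by gcongr; exact Real.one_sub_le_exp_neg _
  have hΓ := rpow_mul_exp_neg_le_Gamma_add_one (x := α * k) (s := s + 1)
    (by positivity) (by positivity)
  rw [div_le_iff₀ (by positivity), ← Real.rpow_mul_natCast hs]
  calc s ^ (α * k)
      ≤ ((s + 1) * Real.exp (-(1 / (s + 1)))) ^ (α * k) := by gcongr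
    _ = Real.exp (s + 1) * Real.exp (-(α / (s + 1))) ^ k *
          ((s + 1) ^ (α * k) * Real.exp (-(s + 1))) := by
        rw [Real.mul_rpow (by positivity) (Real.exp_nonneg _), ← Real.exp_mul, ← Real.exp_nat_mul,
          Real.exp_neg (s + 1), show -(1 / (s + 1)) * (α * k) = k * -(α / (s + 1)) by ring]
        field_simp
    _ ≤ _ := by gcongr

lemma hasSum_mittagLeffler {u : ℝ} (hα : 0 < α) (hu : 0 ≤ u) :
    HasSum (fun k : ℕ => u ^ k / Real.Gamma (α * (k : ℝ) + 1)) (mittagLeffler α u) := by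
  have hs : 0 ≤ u ^ α⁻¹ := by positivity
  have hratio : Real.exp (-(α / (u ^ α⁻¹ + 1))) < 1 :=
    Real.exp_lt_one_iff.2 (neg_lt_zero.2 (by positivity))
  have hgeom := (summable_geometric_of_lt_one (Real.exp_nonneg _) hratio).mul_left
    (Real.exp (u ^ α⁻¹ + 1))
  refine (hgeom.of_nonneg_of_le (fun k => by positivity) fun k => ?_).hasSum
  simpa only [Real.rpow_inv_rpow hu hα.ne'] using rpow_pow_div_Gamma_le hα.le hs k

lemma pow_div_Gamma_le_mittagLeffler {u : ℝ} (hα : 0 < α) (hu : 0 ≤ u) (k : ℕ) :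
    u ^ k / Real.Gamma (α * (k : ℝ) + 1) ≤ mittagLeffler α u :=
  le_hasSum (hasSum_mittagLeffler hα hu) k fun j _ => by positivity

lemma one_add_div_Gamma_le_mittagLeffler {u : ℝ} (hα : 0 < α) (hu : 0 ≤ u) :
    1 + u / Real.Gamma (α + 1) ≤ mittagLeffler α u := by
  have hsum := sum_le_hasSum (Finset.range 2) (fun j _ => by positivity)
    (hasSum_mittagLeffler hα hu)
  simpa [Finset.sum_range_succ] using hsum

lemma one_lt_mittagLeffler {u : ℝ} (hα : 0 < α) (hu : 0 < u) : 1 < mittagLeffler α u := by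
  have : 0 < u / Real.Gamma (α + 1) := by positivity
  linarith [one_add_div_Gamma_le_mittagLeffler hα hu.le]

lemma mittagLeffler_pos {u : ℝ} (hα : 0 < α) (hu : 0 < u) : 0 < mittagLeffler α u :=
  one_pos.trans (one_lt_mittagLeffler hα hu)

lemma mittagLeffler_le_mittagLeffler {u v : ℝ} (hα : 0 < α) (hu : 0 ≤ u) (huv : u ≤ v) :
    mittagLeffler α u ≤ mittagLeffler α v :=
  hasSum_le (fun k => by gcongr) (hasSum_mittagLeffler hα hu)
    (hasSum_mittagLeffler hα (hu.trans huv))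

lemma tendsto_mittagLeffler_atTop (hα : 0 < α) : Tendsto (mittagLeffler α) atTop atTop := by
  refine tendsto_atTop_mono' _ ?_
    (tendsto_atTop_add_const_left _ 1 (tendsto_id.atTop_div_const (r := Real.Gamma (α + 1))
      (by positivity)))
  filter_upwards [eventually_ge_atTop 0] with u hu
  exact one_add_div_Gamma_le_mittagLeffler hα hu

lemma mittagLeffler_rpow_le {s : ℝ} (hα : 0 < α) (hs : 0 ≤ s) :
    mittagLeffler α (s ^ α) ≤ Real.exp (s + 1) * ((s + 1) / α + 1) := by
  have hrate : 0 < α / (s + 1) := by positivity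
  have hgeom := (hasSum_geometric_of_lt_one (Real.exp_nonneg _)
    (Real.exp_lt_one_iff.2 (neg_lt_zero.2 hrate))).mul_left (Real.exp (s + 1))
  calc mittagLeffler α (s ^ α)
      ≤ Real.exp (s + 1) * (1 - Real.exp (-(α / (s + 1))))⁻¹ :=
        hasSum_le (rpow_pow_div_Gamma_le hα.le hs) (hasSum_mittagLeffler hα (by positivity)) hgeom
    _ ≤ Real.exp (s + 1) * ((s + 1) / α + 1) := by
        gcongr
        simpa only [inv_div] using inv_one_sub_exp_neg_le hrate

lemma pow_div_factorial_le_rpow_mul_mittagLeffler {s : ℝ} (hα : 0 < α) (hs : 1 ≤ s) (n : ℕ) :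
    s ^ n / n.factorial ≤ s ^ α * mittagLeffler α (s ^ α) := by
  have hs0 : 0 < s := by linarith
  set k := ⌊n / α⌋₊
  have hk : α * k ≤ n := (le_div_iff₀' hα).1 (Nat.floor_le (by positivity))
  have hk' : n ≤ α + α * k := by
    have := (div_lt_iff₀' hα).1 (Nat.lt_floor_add_one (n / α))
    linarith
  have hpow : s ^ n ≤ s ^ α * (s ^ α) ^ k := by
    rw [← Real.rpow_mul_natCast hs0.le, ← Real.rpow_add hs0, ← Real.rpow_natCast]
    exact Real.rpow_le_rpow_of_exponent_le hs hk'
  calc s ^ n / n.factorial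
      ≤ s ^ α * (s ^ α) ^ k / Real.Gamma (α * k + 1) := by
        gcongr
        exact Gamma_add_one_le_factorial (by positivity) hk
    _ = s ^ α * ((s ^ α) ^ k / Real.Gamma (α * k + 1)) := mul_div_assoc _ _ _
    _ ≤ s ^ α * mittagLeffler α (s ^ α) := by
        gcongr
        exact pow_div_Gamma_le_mittagLeffler hα (by positivity) k

lemma exp_sub_one_le_mul_mittagLeffler_rpow {s : ℝ} (hα : 0 < α) (hs : 1 ≤ s) :
    Real.exp (s - 1) ≤ s * (s ^ α * mittagLeffler α (s ^ α)) := by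
  have hs0 : 0 < s := by linarith
  have hratio : 0 ≤ (s - 1) / s := div_nonneg (by linarith) hs0.le
  have hratio' : (s - 1) / s < 1 := (div_lt_one hs0).2 (by linarith)
  have hexp : HasSum (fun n : ℕ => (s - 1) ^ n / n.factorial) (Real.exp (s - 1)) := by
    rw [Real.exp_eq_exp_ℝ]
    exact NormedSpace.expSeries_div_hasSum_exp (s - 1)
  have hgeom := (hasSum_geometric_of_lt_one hratio hratio').mul_right
    (s ^ α * mittagLeffler α (s ^ α))
  rw [show (1 - (s - 1) / s)⁻¹ = s by field_simp; ring] at hgeom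
  refine hasSum_le (fun n => ?_) hexp hgeom
  calc (s - 1) ^ n / n.factorial
      = ((s - 1) / s) ^ n * (s ^ n / n.factorial) := by rw [div_pow]; field_simp
    _ ≤ _ := by gcongr; exact pow_div_factorial_le_rpow_mul_mittagLeffler hα hs n

lemma log_mittagLeffler_rpow_le {s : ℝ} (hα : 0 < α) (hs : 1 ≤ s) :
    Real.log (mittagLeffler α (s ^ α)) ≤ s + (1 + Real.log (2 / α + 1)) + Real.log s := by
  have hs0 : 0 < s := by linarith
  have hpoly : (s + 1) / α + 1 ≤ (2 / α + 1) * s :=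
    calc (s + 1) / α + 1 ≤ (2 * s) / α + s := by gcongr; linarith
      _ = (2 / α + 1) * s := by ring
  calc Real.log (mittagLeffler α (s ^ α))
      ≤ Real.log (Real.exp (s + 1) * ((2 / α + 1) * s)) := by
        refine Real.log_le_log (mittagLeffler_pos hα (by positivity)) ?_
        exact (mittagLeffler_rpow_le hα hs0.le).trans (by gcongr)
    _ = s + (1 + Real.log (2 / α + 1)) + Real.log s := by
        rw [Real.log_mul (by positivity) (by positivity), Real.log_exp,
          Real.log_mul (by positivity) hs0.ne']
        ring

lemma le_log_mittagLeffler_rpow {s : ℝ} (hα : 0 < α) (hs : 1 ≤ s) :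
    s - 1 - (1 + α) * Real.log s ≤ Real.log (mittagLeffler α (s ^ α)) := by
  have hs0 : 0 < s := by linarith
  have hE := mittagLeffler_pos hα (Real.rpow_pos_of_pos hs0 α)
  have hlog := Real.log_le_log (Real.exp_pos _) (exp_sub_one_le_mul_mittagLeffler_rpow hα hs)
  rw [Real.log_exp, Real.log_mul (by positivity) (by positivity),
    Real.log_mul (by positivity) hE.ne', Real.log_rpow hs0] at hlog
  linarith

theorem tendsto_log_mittagLeffler_rpow_div (hα : 0 < α) :
    Tendsto (fun s : ℝ => Real.log (mittagLeffler α (s ^ α)) / s) atTop (𝓝 1) := by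
  have hlog : Tendsto (fun s : ℝ => Real.log s / s) atTop (𝓝 0) :=
    Real.isLittleO_log_id_atTop.tendsto_div_nhds_zero
  have hconst (C : ℝ) : Tendsto (fun s : ℝ => C / s) atTop (𝓝 0) :=
    tendsto_const_nhds.div_atTop tendsto_id
  have hlower : Tendsto (fun s : ℝ => 1 - 1 / s - (1 + α) * (Real.log s / s)) atTop (𝓝 1) := by
    simpa using (tendsto_const_nhds.sub (hconst 1)).sub (hlog.const_mul (1 + α))
  have hupper : Tendsto (fun s : ℝ => 1 + (1 + Real.log (2 / α + 1)) / s + Real.log s / s)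
      atTop (𝓝 1) := by
    simpa using (tendsto_const_nhds.add (hconst _)).add hlog
  refine tendsto_of_tendsto_of_tendsto_of_le_of_le' hlower hupper ?_ ?_
  · filter_upwards [eventually_ge_atTop 1] with s hs
    convert div_le_div_of_nonneg_right (le_log_mittagLeffler_rpow hα hs) (by linarith : 0 ≤ s)
      using 1
    field_simp
  · filter_upwards [eventually_ge_atTop 1] with s hs
    convert div_le_div_of_nonneg_right (log_mittagLeffler_rpow_le hα hs) (by linarith : 0 ≤ s)
      using 1
    field_simp

lemma tendsto_rpow_neg_mul_log_mittagLeffler {c p : ℝ} (hα : 0 < α) (hc : 0 < c) (hp : 0 < p) :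
    Tendsto (fun t : ℝ => t ^ (-(p / α)) * Real.log (mittagLeffler α (c * t ^ p))) atTop
      (𝓝 (c ^ (1 / α))) := by
  have hscale : Tendsto (fun t : ℝ => c ^ (1 / α) * t ^ (p / α)) atTop atTop :=
    (tendsto_rpow_atTop (by positivity)).const_mul_atTop (by positivity)
  have hlim := ((tendsto_log_mittagLeffler_rpow_div hα).comp hscale).const_mul (c ^ (1 / α))
  rw [mul_one] at hlim
  refine hlim.congr' ?_
  filter_upwards [eventually_gt_atTop 0] with t ht
  have harg : (c ^ (1 / α) * t ^ (p / α)) ^ α = c * t ^ p := by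
    rw [Real.mul_rpow (by positivity) (by positivity), ← Real.rpow_mul hc.le,
      ← Real.rpow_mul ht.le, one_div_mul_cancel hα.ne', div_mul_cancel₀ _ hα.ne', Real.rpow_one]
  simp only [Function.comp_apply, harg, Real.rpow_neg ht.le]
  field_simp

lemma tendsto_rpow_neg_mul_log_mittagLeffler_zero {c p q : ℝ} (hα : 0 < α) (hc : 0 < c)
    (hq : 0 < q) (hpq : p / α < q) :
    Tendsto (fun t : ℝ => t ^ (-q) * Real.log (mittagLeffler α (c * t ^ p))) atTop (𝓝 0) := by
  -- For `p ≤ 0` the argument does not tend to `∞`, so compare with a positive exponent `r * α`.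
  obtain ⟨r, hr, hrq⟩ := exists_between (max_lt hq hpq)
  obtain ⟨hr0, hpr⟩ := max_lt_iff.1 hr
  have hupper : Tendsto (fun t : ℝ => t ^ (-q) * Real.log (mittagLeffler α (c * t ^ (r * α))))
      atTop (𝓝 0) := by
    have hlim := (tendsto_rpow_neg_atTop (sub_pos.2 hrq)).mul
      (tendsto_rpow_neg_mul_log_mittagLeffler hα hc (mul_pos hr0 hα))
    rw [zero_mul] at hlim
    refine hlim.congr' ?_
    filter_upwards [eventually_gt_atTop 0] with t ht
    rw [← mul_assoc, ← Real.rpow_add ht, mul_div_cancel_right₀ _ hα.ne']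
    ring_nf
  refine tendsto_of_tendsto_of_tendsto_of_le_of_le' tendsto_const_nhds hupper ?_ ?_
  · filter_upwards [eventually_gt_atTop 0] with t ht
    have := Real.log_nonneg (one_lt_mittagLeffler hα (u := c * t ^ p) (by positivity)).le
    positivity
  · filter_upwards [eventually_ge_atTop 1] with t ht
    have hexp : t ^ p ≤ t ^ (r * α) :=
      Real.rpow_le_rpow_of_exponent_le ht ((div_lt_iff₀ hα).1 hpr).le
    refine mul_le_mul_of_nonneg_left (Real.log_le_log ?_ ?_) (by positivity)
    · exact mittagLeffler_pos hα (by positivity)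
    · exact mittagLeffler_le_mittagLeffler hα (by positivity) (by gcongr)

end MittagLeffler

section LogarithmicScale

lemma log_add_le_log_two_add_max {x y : ℝ} (hx : 0 < x) (hy : 0 < y) :
    Real.log (x + y) ≤ Real.log 2 + max (Real.log x) (Real.log y) := by
  have hmax : 0 < max x y := lt_max_of_lt_left hx
  calc Real.log (x + y)
      ≤ Real.log (2 * max x y) :=
        Real.log_le_log (by positivity) (by linarith [le_max_left x y, le_max_right x y])
    _ = Real.log 2 + Real.log (max x y) := Real.log_mul two_ne_zero hmax.ne'
    _ = Real.log 2 + max (Real.log x) (Real.log y) := by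
        rw [Real.strictMonoOn_log.monotoneOn.map_max hx hy]

variable {ι : Type*} {l : Filter ι} {T a b : ι → ℝ}

lemma tendsto_mul_log_add {A B : ℝ} (hT : Tendsto T l (𝓝 0)) (hT0 : ∀ᶠ i in l, 0 ≤ T i)
    (ha0 : ∀ᶠ i in l, 0 < a i) (hb0 : ∀ᶠ i in l, 0 < b i)
    (ha : Tendsto (fun i => T i * Real.log (a i)) l (𝓝 A))
    (hb : Tendsto (fun i => T i * Real.log (b i)) l (𝓝 B)) :
    Tendsto (fun i => T i * Real.log (a i + b i)) l (𝓝 (max A B)) := by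
  have hmax := ha.max hb
  have hupper := (hT.mul_const (Real.log 2)).add hmax
  rw [zero_mul, zero_add] at hupper
  refine tendsto_of_tendsto_of_tendsto_of_le_of_le' hmax hupper ?_ ?_
  · filter_upwards [hT0, ha0, hb0] with i hTi hai hbi
    apply max_le <;> gcongr <;> linarith
  · filter_upwards [hT0, ha0, hb0] with i hTi hai hbi
    rw [← mul_max_of_nonneg _ _ hTi, ← mul_add]
    exact mul_le_mul_of_nonneg_left (log_add_le_log_two_add_max hai hbi) hTi

lemma tendsto_mul_log_sub_one {A : ℝ} (hT : Tendsto T l (𝓝 0)) (ha : Tendsto a l atTop)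
    (haA : Tendsto (fun i => T i * Real.log (a i)) l (𝓝 A)) :
    Tendsto (fun i => T i * Real.log (a i - 1)) l (𝓝 A) := by
  have hratio : Tendsto (fun i => Real.log (1 - (a i)⁻¹)) l (𝓝 0) := by
    have hone : Tendsto (fun i => 1 - (a i)⁻¹) l (𝓝 1) := by
      simpa using tendsto_const_nhds.sub (tendsto_inv_atTop_zero.comp ha)
    simpa using hone.log one_ne_zero
  have hsum := haA.add (hT.mul hratio)
  rw [zero_mul, add_zero] at hsum
  refine hsum.congr' ?_
  filter_upwards [ha.eventually_gt_atTop 1] with i hi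
  have hinv : (a i)⁻¹ < 1 := inv_lt_one_of_one_lt₀ hi
  rw [← mul_add, ← Real.log_mul (by linarith) (by linarith), mul_sub, mul_one,
    mul_inv_cancel₀ (by linarith)]

end LogarithmicScale

section Model

variable {lam α α0 αt αt0 : ℝ}

/-- The unnormalized moment generating function `∑ₖ e^{θk} w(t,k)` of the weights; normalizing it
by its value at `θ = 0` gives `E[e^{θN(t)}]`. -/
noncomputable def wgtMgf (lam α α0 αt αt0 t θ : ℝ) : ℝ :=
  ∑' k : ℕ, Real.exp (θ * (k : ℝ)) * wgt lam α α0 αt αt0 t k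

lemma tsum_exp_mul_pmfCtr (lam α α0 αt αt0 t θ : ℝ) :
    ∑' k : ℕ, Real.exp (θ * (k : ℝ)) * pmfCtr lam α α0 αt αt0 t k =
      wgtMgf lam α α0 αt αt0 t θ / wgtMgf lam α α0 αt αt0 t 0 := by
  simp only [pmfCtr, wgtMgf, ← mul_div_assoc, tsum_div_const, zero_mul, Real.exp_zero, one_mul]

lemma wgtMgf_eq {t : ℝ} (hlam : 0 < lam) (hα : 0 < α) (ht : 0 < t) (θ : ℝ) :
    wgtMgf lam α α0 αt αt0 t θ = (mittagLeffler α0 (lam * t ^ αt0))⁻¹ +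
      (mittagLeffler α (Real.exp θ * lam * t ^ αt) - 1) / mittagLeffler α (lam * t ^ αt) := by
  have hseries := ((hasSum_mittagLeffler hα (u := Real.exp θ * lam * t ^ αt)
    (by positivity)).div_const (mittagLeffler α (lam * t ^ αt))).update 0
      (mittagLeffler α0 (lam * t ^ αt0))⁻¹
  have hterms : (fun k : ℕ => Real.exp (θ * (k : ℝ)) * wgt lam α α0 αt αt0 t k) =
      Function.update (fun k : ℕ => (Real.exp θ * lam * t ^ αt) ^ k /
        Real.Gamma (α * (k : ℝ) + 1) / mittagLeffler α (lam * t ^ αt)) 0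
          (mittagLeffler α0 (lam * t ^ αt0))⁻¹ := by
    funext k
    rcases eq_or_ne k 0 with rfl | hk
    · simp [wgt]
    · rw [Function.update_of_ne hk, wgt, if_neg hk, mul_comm θ, Real.exp_nat_mul,
        mul_assoc (Real.exp θ), mul_pow (Real.exp θ), div_div, mul_div_assoc]
  rw [wgtMgf, hterms, hseries.tsum_eq]
  simp only [pow_zero, Nat.cast_zero, mul_zero, zero_add, Real.Gamma_one, div_one]
  ring

lemma wgtMgf_pos {t : ℝ} (hlam : 0 < lam) (hα : 0 < α) (hα0 : 0 < α0) (ht : 0 < t) (θ : ℝ) :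
    0 < wgtMgf lam α α0 αt αt0 t θ := by
  rw [wgtMgf_eq hlam hα ht]
  have hE0 := mittagLeffler_pos hα0 (u := lam * t ^ αt0) (by positivity)
  have hE := mittagLeffler_pos hα (u := lam * t ^ αt) (by positivity)
  have hEθ := one_lt_mittagLeffler hα (u := Real.exp θ * lam * t ^ αt) (by positivity)
  have := div_pos (sub_pos.2 hEθ) hE
  positivity

lemma tendsto_rpow_neg_mul_log_tail (hlam : 0 < lam) (hα : 0 < α) (hαt : 0 < αt) (θ : ℝ) :
    Tendsto (fun t : ℝ => t ^ (-(αt / α)) *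
        Real.log ((mittagLeffler α (Real.exp θ * lam * t ^ αt) - 1) /
          mittagLeffler α (lam * t ^ αt)))
      atTop (𝓝 (lam ^ (1 / α) * (Real.exp (θ / α) - 1))) := by
  have hc : 0 < Real.exp θ * lam := by positivity
  have hT : Tendsto (fun t : ℝ => t ^ (-(αt / α))) atTop (𝓝 0) :=
    tendsto_rpow_neg_atTop (by positivity)
  have hEθ : Tendsto (fun t : ℝ => mittagLeffler α (Real.exp θ * lam * t ^ αt)) atTop atTop :=
    (tendsto_mittagLeffler_atTop hα).comp ((tendsto_rpow_atTop hαt).const_mul_atTop hc)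
  have hlim := (tendsto_mul_log_sub_one hT hEθ
    (tendsto_rpow_neg_mul_log_mittagLeffler hα hc hαt)).sub
      (tendsto_rpow_neg_mul_log_mittagLeffler hα hlam hαt)
  have hval : (Real.exp θ * lam) ^ (1 / α) - lam ^ (1 / α) =
      lam ^ (1 / α) * (Real.exp (θ / α) - 1) := by
    rw [Real.mul_rpow (Real.exp_nonneg θ) hlam.le, ← Real.exp_mul, mul_one_div]
    ring
  rw [hval] at hlim
  refine hlim.congr' ?_
  filter_upwards [eventually_gt_atTop 0] with t ht
  rw [Real.log_div (sub_pos.2 (one_lt_mittagLeffler hα (by positivity))).ne'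
    (mittagLeffler_pos hα (by positivity)).ne', mul_sub]

lemma tendsto_rpow_neg_mul_log_wgtMgf (hlam : 0 < lam) (hα : 0 < α) (hα0 : 0 < α0)
    (hαt : 0 < αt) (hcase : αt0 / α0 < αt / α) (θ : ℝ) :
    Tendsto (fun t : ℝ => t ^ (-(αt / α)) * Real.log (wgtMgf lam α α0 αt αt0 t θ)) atTop
      (𝓝 (PsiFun lam α θ)) := by
  have hrate : 0 < αt / α := by positivity
  have hatom : Tendsto (fun t : ℝ => t ^ (-(αt / α)) *
      Real.log (mittagLeffler α0 (lam * t ^ αt0))⁻¹) atTop (𝓝 0) := by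
    simpa only [Real.log_inv, mul_neg, neg_zero] using
      (tendsto_rpow_neg_mul_log_mittagLeffler_zero hα0 hlam hrate hcase).neg
  have hsum := tendsto_mul_log_add (tendsto_rpow_neg_atTop hrate) ?_ ?_ ?_
    (tendsto_rpow_neg_mul_log_tail hlam hα hαt θ) hatom
  · refine hsum.congr' ?_
    filter_upwards [eventually_gt_atTop 0] with t ht
    rw [wgtMgf_eq hlam hα ht, add_comm]
  all_goals filter_upwards [eventually_gt_atTop 0] with t ht
  · positivity
  · exact div_pos (sub_pos.2 (one_lt_mittagLeffler hα (by positivity)))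
      (mittagLeffler_pos hα (by positivity))
  · exact inv_pos.2 (mittagLeffler_pos hα0 (by positivity))

lemma PsiFun_zero (lam α : ℝ) : PsiFun lam α 0 = 0 := by
  simp [PsiFun]

theorem tendsto_rpow_neg_mul_log_mgf (hlam : 0 < lam) (hα : 0 < α) (hα0 : 0 < α0)
    (hαt : 0 < αt) (hcase : αt0 / α0 < αt / α) (θ : ℝ) :
    Tendsto (fun t : ℝ => t ^ (-(αt / α)) *
        Real.log (∑' k : ℕ, Real.exp (θ * (k : ℝ)) * pmfCtr lam α α0 αt αt0 t k))
      atTop (𝓝 (PsiFun lam α θ)) := by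
  have hlim := (tendsto_rpow_neg_mul_log_wgtMgf hlam hα hα0 hαt hcase θ).sub
    (tendsto_rpow_neg_mul_log_wgtMgf hlam hα hα0 hαt hcase 0)
  rw [PsiFun_zero, sub_zero] at hlim
  refine hlim.congr' ?_
  filter_upwards [eventually_gt_atTop 0] with t ht
  rw [tsum_exp_mul_pmfCtr, Real.log_div (wgtMgf_pos hlam hα hα0 ht θ).ne'
    (wgtMgf_pos hlam hα hα0 ht 0).ne', mul_sub]

end Model

section Kink

variable {lam α : ℝ}

lemma hasDerivWithinAt_PsiFun_Iic (hlam : 0 ≤ lam) (hα : 0 ≤ α) :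
    HasDerivWithinAt (PsiFun lam α) 0 (Iic 0) 0 := by
  refine (hasDerivWithinAt_const (0 : ℝ) (Iic 0) (0 : ℝ)).congr (fun θ hθ => ?_)
    (PsiFun_zero lam α)
  have hexp : Real.exp (θ / α) ≤ 1 :=
    Real.exp_le_one_iff.2 (div_nonpos_of_nonpos_of_nonneg hθ hα)
  exact max_eq_right (mul_nonpos_of_nonneg_of_nonpos (by positivity) (by linarith))

lemma hasDerivWithinAt_PsiFun_Ici (hlam : 0 ≤ lam) (hα : 0 ≤ α) :
    HasDerivWithinAt (PsiFun lam α) (lam ^ (1 / α) / α) (Ici 0) 0 := by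
  have hderiv : HasDerivAt (fun θ : ℝ => lam ^ (1 / α) * (Real.exp (θ / α) - 1))
      (lam ^ (1 / α) / α) 0 := by
    simpa [div_eq_mul_inv] using
      ((((hasDerivAt_id (0 : ℝ)).div_const α).exp).sub_const 1).const_mul (lam ^ (1 / α))
  refine hderiv.hasDerivWithinAt.congr (fun θ hθ => ?_) (by simp [PsiFun])
  have hexp : 1 ≤ Real.exp (θ / α) := Real.one_le_exp (div_nonneg hθ hα)
  exact max_eq_left (mul_nonneg (by positivity) (by linarith))

lemma not_differentiableAt_of_hasDerivWithinAt_Iic_Ici {E : Type*} [NormedAddCommGroup E]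
    [NormedSpace ℝ E] {f : ℝ → E} {x : ℝ} {f₁ f₂ : E} (hleft : HasDerivWithinAt f f₁ (Iic x) x)
    (hright : HasDerivWithinAt f f₂ (Ici x) x) (hne : f₁ ≠ f₂) : ¬ DifferentiableAt ℝ f x := by
  intro hf
  have h₁ := (uniqueDiffWithinAt_Iic x).eq_deriv _ hleft hf.hasDerivAt.hasDerivWithinAt
  have h₂ := (uniqueDiffWithinAt_Ici x).eq_deriv _ hright hf.hasDerivAt.hasDerivWithinAt
  exact hne (h₁.trans h₂.symm)

end Kink

theorem counterexample_Psi_general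
    (lam α α0 αt αt0 : ℝ) (hlam : 0 < lam) (hα : 0 < α) (hα0 : 0 < α0) (hαt : 0 < αt)
    (hcase : αt0 / α0 < αt / α) :
    (∀ θ : ℝ,
      Tendsto (fun t : ℝ => t ^ (-(αt / α)) *
          Real.log (∑' k : ℕ, Real.exp (θ * (k : ℝ)) * pmfCtr lam α α0 αt αt0 t k))
        atTop (𝓝 (PsiFun lam α θ))) ∧
    ¬ DifferentiableAt ℝ (PsiFun lam α) 0 ∧
    HasDerivWithinAt (PsiFun lam α) 0 (Set.Iic 0) 0 ∧
    HasDerivWithinAt (PsiFun lam α) (lam ^ (1 / α) / α) (Set.Ici 0) 0 := by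
  have hleft := hasDerivWithinAt_PsiFun_Iic hlam.le hα.le
  have hright := hasDerivWithinAt_PsiFun_Ici hlam.le hα.le
  have hne : (0 : ℝ) ≠ lam ^ (1 / α) / α := by positivity
  exact ⟨tendsto_rpow_neg_mul_log_mgf hlam hα hα0 hαt hcase,
    not_differentiableAt_of_hasDerivWithinAt_Iic_Ici hleft hright hne, hleft, hright⟩

/-- Section 4.2.2 of the paper: for the model where Condition (B3) fails
(`α̃/α > α̃_0/α_0`), the scaled cumulant limit `Ψ(θ) = lim t^{-α̃/α} log E[e^{θN(t)}]`
exists, equals `max{λ^{1/α}(e^{θ/α}-1), 0}`, and is not differentiable at `0`: its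
left derivative at `0` is `0` and its right derivative at `0` is `λ^{1/α}/α`. -/
theorem counterexample_Psi
    (lam α α0 αt αt0 : ℝ) (hlam : 0 < lam)
    (hα : α ∈ Set.Ioc (0 : ℝ) 1) (hα0 : α0 ∈ Set.Ioc (0 : ℝ) 1)
    (hαt : αt ∈ Set.Ioc (0 : ℝ) 1) (hαt0 : αt0 ∈ Set.Ioc (0 : ℝ) 1)
    (hcase : αt0 / α0 < αt / α) :
    (∀ θ : ℝ,
      Tendsto (fun t : ℝ => t ^ (-(αt / α)) *
          Real.log (∑' k : ℕ, Real.exp (θ * (k : ℝ)) * pmfCtr lam α α0 αt αt0 t k))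
        atTop (𝓝 (PsiFun lam α θ))) ∧
    ¬ DifferentiableAt ℝ (PsiFun lam α) 0 ∧
    HasDerivWithinAt (PsiFun lam α) 0 (Set.Iic 0) 0 ∧
    HasDerivWithinAt (PsiFun lam α) (lam ^ (1 / α) / α) (Set.Ici 0) 0 := by
  exact counterexample_Psi_general lam α α0 αt αt0 hlam hα.1 hα0.1 hαt.1 hcase
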